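/- Fix an integer p ≥ 2, θ ∈ S^{p-1}, f ∈ 𝓕, and let κ_n = τ_n p/√n, where the real sequence (τ_n) is bounded and does not converge to 0. Define the log-likelihood ratio Λ_n : (S^{p-1})^n → ℝ by Λ_n(x) := Σ_{i=1}^n log( (c_{p,κ_n,f}/c_p) f(κ_n (x_i'θ)²) ), the central sequence Δ_θ^{(n)}(x) := (p/√n) Σ_{i=1}^n ( (x_i'θ)² − 1/p ), and the Fisher information Γ_p := 2(p−1)/(p+2). Then Λ_n − τ_n Δ_θ^{(n)} + (τ_n²/2) Γ_p converges to 0 in P_0^{(n)}-probability, i.e., for every ε > 0, P_0^{(n)}( { x : |Λ_n(x) − τ_n Δ_θ^{(n)}(x) + (τ_n²/2) Γ_p| > ε } ) → 0 as n → ∞. -/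

import Mathlib

open MeasureTheory ProbabilityTheory Filter Matrix Real
open scoped ENNReal NNReal Topology

noncomputable section

/-- The normalizing constant `c_p = 1 / ∫_{-1}^1 (1-s²)^{(p-3)/2} ds`. -/
def c0 (p : ℕ) : ℝ := 1 / ∫ s in (-1:ℝ)..1, (1 - s ^ 2) ^ (((p : ℝ) - 3) / 2)

/-- The normalizing constant `c_{p,κ,f} = 1 / ∫_{-1}^1 (1-s²)^{(p-3)/2} f(κ s²) ds`. -/
def cKF (p : ℕ) (κ : ℝ) (f : ℝ → ℝ) : ℝ :=
  1 / ∫ s in (-1:ℝ)..1, (1 - s ^ 2) ^ (((p : ℝ) - 3) / 2) * f (κ * s ^ 2)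

/-!
The ratio `c_p / c_{p,κ,f}` is the integral of `f (κ s²)` under the law of one coordinate `s` of a
uniform point of the sphere. Since `f` has a quadratic Taylor expansion at `0`, so do this integral
as a function of `κ`, and the logarithms of both. As `n κ_n²` stays bounded, the `n` remainders
`o(κ_n²)` add up to `o(1)`. The first-order terms are `τ_n Δ_n`, and the second-order ones are
an average of `(x_i'θ)⁴`, to which the weak law of large numbers applies. The mean `3 / (p (p + 2))`
of `(x'θ)⁴` comes from rotation invariance: polarization gives `E (x_i² x_j²) = E (x_i⁴) / 3` for
`i ≠ j`, and `∑_{i,j} x_i² x_j² = 1` on the sphere.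
-/

/-- The second-order Peano expansion `g t = c₀ + c₁ t + c₂ t² + o(t²)` at `0`, which asks for no
derivative of `g` away from `0`. -/
def HasQuadraticExpansion (g : ℝ → ℝ) (c₀ c₁ c₂ : ℝ) : Prop :=
  (fun t => g t - (c₀ + c₁ * t + c₂ * t ^ 2)) =o[𝓝 0] (fun t => t ^ 2)

theorem eventually_forall_comp_mul {p : ℝ → Prop} (hp : ∀ᶠ t in 𝓝 0, p t) (B : ℝ) :
    ∀ᶠ k in 𝓝 (0 : ℝ), ∀ t, |t| ≤ B → p (k * t) := by
  obtain ⟨δ, hδ, hball⟩ := Metric.eventually_nhds_iff.1 hp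
  have hsmall : ∀ᶠ k in 𝓝 (0 : ℝ), |k| * B < δ :=
    (by fun_prop : Continuous fun k : ℝ => |k| * B).tendsto' 0 0 (by simp) |>.eventually_lt_const hδ
  filter_upwards [hsmall] with k hk t ht
  refine hball ?_
  rw [dist_zero_right, Real.norm_eq_abs, abs_mul]
  exact (mul_le_mul_of_nonneg_left ht (abs_nonneg k)).trans_lt hk

theorem eventually_forall_abs_comp_mul_le {r : ℝ → ℝ} (hr : r =o[𝓝 0] (fun t => t ^ 2))
    (B : ℝ) {η : ℝ} (hη : 0 < η) : ∀ᶠ k in 𝓝 0, ∀ t, |t| ≤ B → |r (k * t)| ≤ η * k ^ 2 := by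
  filter_upwards [eventually_forall_comp_mul
    (hr.def (show 0 < η / (B ^ 2 + 1) by positivity)) B] with k hk t ht
  have ht2 : t ^ 2 ≤ B ^ 2 := sq_le_sq.2 (ht.trans (le_abs_self B))
  calc |r (k * t)| ≤ η / (B ^ 2 + 1) * ‖(k * t) ^ 2‖ := hk t ht
    _ = η / (B ^ 2 + 1) * (k ^ 2 * t ^ 2) := by rw [mul_pow, Real.norm_of_nonneg (by positivity)]
    _ ≤ η / (B ^ 2 + 1) * (k ^ 2 * (B ^ 2 + 1)) := by gcongr; linarith
    _ = η * k ^ 2 := by field_simp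

namespace HasQuadraticExpansion

variable {g : ℝ → ℝ} {c₀ c₁ c₂ : ℝ}

theorem of_hasDerivAt {g' : ℝ → ℝ} {b : ℝ} (hg : ∀ᶠ x in 𝓝 0, HasDerivAt g (g' x) x)
    (hg' : HasDerivAt g' b 0) : HasQuadraticExpansion g (g 0) (g' 0) (b / 2) := by
  obtain ⟨δ, hδ, hball⟩ := Metric.eventually_nhds_iff_ball.1 hg
  have hderiv : ∀ x ∈ Metric.ball (0 : ℝ) δ,
      HasDerivWithinAt (fun x => g x - g' 0 * x - b / 2 * x ^ 2) (g' x - g' 0 - b * x)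
        (Metric.ball 0 δ) x := fun x hx => by
    have h := ((hball x hx).sub ((hasDerivAt_id x).const_mul (g' 0))).sub
      ((hasDerivAt_pow 2 x).const_mul (b / 2))
    refine (h.congr_deriv ?_).hasDerivWithinAt
    push_cast
    ring
  have hlittle : (fun x => g' x - g' 0 - b * x) =o[𝓝 0] (fun x => (x - 0) ^ 1) := by
    simpa [mul_comm b] using hasDerivAt_iff_isLittleO.1 hg'
  have h := (convex_ball (0 : ℝ) δ).isLittleO_pow_succ_real (Metric.mem_ball_self hδ) hderiv
    (hlittle.mono nhdsWithin_le_nhds)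
  rw [nhdsWithin_eq_nhds.2 (Metric.ball_mem_nhds 0 hδ)] at h
  refine (h.congr_left fun x => ?_).congr_right fun x => by rw [sub_zero]
  ring

theorem tendsto (h : HasQuadraticExpansion g c₀ c₁ c₂) : Tendsto g (𝓝 0) (𝓝 c₀) := by
  have hsq : Tendsto (fun t : ℝ => t ^ 2) (𝓝 0) (𝓝 0) := (continuous_pow 2).tendsto' 0 0 (by simp)
  have hpoly : Tendsto (fun t : ℝ => c₀ + c₁ * t + c₂ * t ^ 2) (𝓝 0) (𝓝 c₀) :=
    (by fun_prop : Continuous fun t : ℝ => c₀ + c₁ * t + c₂ * t ^ 2).tendsto' 0 c₀ (by simp)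
  simpa using (h.trans_tendsto hsq).add hpoly

theorem isLittleO_sub_linear (h : HasQuadraticExpansion g c₀ c₁ c₂) :
    (fun t => g t - c₀ - c₁ * t) =o[𝓝 0] (fun t => t) := by
  have hsq : (fun t : ℝ => t ^ 2) =o[𝓝 0] (fun t : ℝ => t) :=
    Asymptotics.isLittleO_pow_id one_lt_two
  refine ((h.trans hsq).add (hsq.const_mul_left c₂)).congr_left fun t => ?_
  ring

theorem log_one_add : HasQuadraticExpansion (fun t => log (1 + t)) 0 1 (-1 / 2) := by
  have hne : ∀ᶠ x : ℝ in 𝓝 0, 1 + x ≠ 0 :=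
    (by fun_prop : ContinuousAt (fun x : ℝ => 1 + x) 0).eventually_ne (by simp)
  have hadd (x : ℝ) : HasDerivAt (fun t : ℝ => 1 + t) 1 x := (hasDerivAt_id x).const_add 1
  have h := of_hasDerivAt (g' := fun x => 1 / (1 + x)) (b := -1)
    (hne.mono fun x hx => (hadd x).log hx)
    (by simpa [one_div] using (hadd 0).fun_inv (by simp))
  simpa using h

protected theorem log (h : HasQuadraticExpansion g 1 c₁ c₂) :
    HasQuadraticExpansion (fun t => log (g t)) 0 c₁ (c₂ - c₁ ^ 2 / 2) := by
  have hlin := h.isLittleO_sub_linear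
  have hc₁ : (fun t : ℝ => c₁ * t) =O[𝓝 0] (fun t : ℝ => t) :=
    (Asymptotics.isBigO_refl _ _).const_mul_left c₁
  have hbig : (fun t => g t - 1) =O[𝓝 0] (fun t : ℝ => t) :=
    (hlin.isBigO.add hc₁).congr_left fun t => by ring
  have hlog := (log_one_add.comp_tendsto (hbig.trans_tendsto tendsto_id)).trans_isBigO (hbig.pow 2)
  have hsq : (fun t => (g t - 1 - c₁ * t) * (g t - 1 + c₁ * t)) =o[𝓝 0] (fun t : ℝ => t ^ 2) := by
    simpa only [sq] using hlin.mul_isBigO (hbig.add hc₁)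
  refine ((hlog.add h).sub (hsq.const_mul_left (1 / 2))).congr_left fun t => ?_
  simp only [Function.comp_apply, add_sub_cancel]
  ring

theorem integral_comp_mul {X : Type*} [MeasurableSpace X] {μ : Measure X} [IsProbabilityMeasure μ]
    {T : X → ℝ} (hT : AEStronglyMeasurable T μ) {B : ℝ} (hB : ∀ᵐ x ∂μ, |T x| ≤ B)
    (hg : HasQuadraticExpansion g c₀ c₁ c₂)
    (hint : ∀ᶠ k in 𝓝 0, Integrable (fun x => g (k * T x)) μ) :
    HasQuadraticExpansion (fun k => ∫ x, g (k * T x) ∂μ) c₀ (c₁ * ∫ x, T x ∂μ)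
      (c₂ * ∫ x, T x ^ 2 ∂μ) := by
  refine Asymptotics.isLittleO_iff.2 fun η hη => ?_
  have hT1 : Integrable T μ := .of_bound hT B hB
  have hT2 : Integrable (fun x => T x ^ 2) μ := by
    refine .of_bound (hT.pow 2) (B ^ 2) (hB.mono fun x hx => ?_)
    simpa using pow_le_pow_left₀ (abs_nonneg _) hx 2
  filter_upwards [hint, eventually_forall_abs_comp_mul_le hg B hη] with k hk hrem
  have hlin : Integrable (fun x => c₀ + c₁ * k * T x) μ :=
    (integrable_const _).add (hT1.const_mul _)
  have hpoly (x : X) : c₀ + c₁ * (k * T x) + c₂ * (k * T x) ^ 2 =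
      c₀ + c₁ * k * T x + c₂ * k ^ 2 * T x ^ 2 := by ring
  have hpolyInt : Integrable (fun x => c₀ + c₁ * (k * T x) + c₂ * (k * T x) ^ 2) μ := by
    simp only [hpoly]
    exact hlin.add (hT2.const_mul _)
  have hintegral : ∫ x, (c₀ + c₁ * (k * T x) + c₂ * (k * T x) ^ 2) ∂μ =
      c₀ + c₁ * (∫ x, T x ∂μ) * k + c₂ * (∫ x, T x ^ 2 ∂μ) * k ^ 2 := by
    simp only [hpoly]
    rw [integral_add hlin (hT2.const_mul _), integral_add (integrable_const _) (hT1.const_mul _),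
      integral_const_mul, integral_const_mul, integral_const, probReal_univ, one_smul]
    ring
  rw [← hintegral, ← integral_sub hk hpolyInt]
  have hle := norm_integral_le_of_norm_le_const (μ := μ) (C := η * k ^ 2)
    (f := fun x => g (k * T x) - (c₀ + c₁ * (k * T x) + c₂ * (k * T x) ^ 2))
    (hB.mono fun x hx => hrem (T x) hx)
  simpa using hle

end HasQuadraticExpansion

theorem eventually_integrable_comp_mul {X : Type*} [MeasurableSpace X] {μ : Measure X}
    [IsFiniteMeasure μ] {T : X → ℝ} (hT : AEStronglyMeasurable T μ) {B : ℝ}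
    (hB : ∀ᵐ x ∂μ, |T x| ≤ B) {g : ℝ → ℝ} (hg : ∀ᶠ t in 𝓝 0, ContinuousAt g t) :
    ∀ᶠ k in 𝓝 0, Integrable (fun x => g (k * T x)) μ := by
  obtain ⟨δ, hδ, hball⟩ := Metric.nhds_basis_closedBall.eventually_iff.1 hg
  rw [Real.closedBall_eq_Icc, zero_sub, zero_add] at hball
  have hcont : ContinuousOn g (Set.Icc (-δ) δ) := fun t ht => (hball ht).continuousWithinAt
  obtain ⟨C, hC⟩ := isCompact_Icc.exists_bound_of_continuousOn hcont
  have hle : -δ ≤ δ := by linarith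
  have hext : Continuous (Set.IccExtend hle (Set.domRestrict (Set.Icc (-δ) δ) g)) :=
    (continuousOn_iff_continuous_domRestrict.1 hcont).Icc_extend'
  have hnhds : ∀ᶠ t in 𝓝 (0 : ℝ), t ∈ Set.Icc (-δ) δ := Icc_mem_nhds (by linarith) hδ
  filter_upwards [eventually_forall_comp_mul hnhds B] with k hk
  have hmem : ∀ᵐ x ∂μ, k * T x ∈ Set.Icc (-δ) δ := hB.mono fun x hx => hk _ hx
  refine .of_bound ?_ C (hmem.mono fun x hx => hC _ hx)
  refine (hext.comp_aestronglyMeasurable (hT.const_mul k)).congr (hmem.mono fun x hx => ?_)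
  exact Set.IccExtend_of_mem hle _ hx

theorem tendsto_zero_of_natCast_mul_sq_le {k : ℕ → ℝ} {C : ℝ} (hC : ∀ n, n * k n ^ 2 ≤ C) :
    Tendsto k atTop (𝓝 0) := by
  have hlim : Tendsto (fun n : ℕ => √(C / n)) atTop (𝓝 0) := by
    simpa using (tendsto_const_div_atTop_nhds_zero_nat C).sqrt
  refine squeeze_zero_norm' ?_ hlim
  filter_upwards [eventually_gt_atTop 0] with n hn
  exact abs_le_sqrt ((le_div_iff₀' (Nat.cast_pos.2 hn)).2 (hC n))

theorem ae_pi_forall {X : Type*} [MeasurableSpace X] {U : Measure X} [IsProbabilityMeasure U]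
    {p : X → Prop} (hp : ∀ᵐ x ∂U, p x) (n : ℕ) :
    ∀ᵐ x ∂(Measure.pi fun _ : Fin n => U), ∀ i, p (x i) :=
  eventually_all.2 fun i =>
    (Measure.tendsto_eval_ae_ae (μ := fun _ : Fin n => U) (i := i)).eventually hp

/-- Convergence to `0` in probability of random variables `Z n` living on probability spaces
`(Ω n, P n)` that vary with `n`, which `MeasureTheory.TendstoInMeasure` does not cover. -/
def TendstoZeroInProbability {Ω : ℕ → Type*} [∀ n, MeasurableSpace (Ω n)]
    (P : ∀ n, Measure (Ω n)) (Z : ∀ n, Ω n → ℝ) : Prop :=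
  ∀ ε > (0 : ℝ), Tendsto (fun n => P n {ω | ε < |Z n ω|}) atTop (𝓝 0)

namespace TendstoZeroInProbability

section

variable {Ω : ℕ → Type*} [∀ n, MeasurableSpace (Ω n)] {P : ∀ n, Measure (Ω n)}
  {Z W : ∀ n, Ω n → ℝ}

theorem congr (hZ : TendstoZeroInProbability P Z) (h : ∀ᶠ n in atTop, Z n =ᵐ[P n] W n) :
    TendstoZeroInProbability P W := fun ε hε => by
  refine (hZ ε hε).congr' (h.mono fun n hn => measure_congr ?_)
  filter_upwards [hn] with ω hω
  exact congrArg (fun z => ε < |z|) hω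

theorem add (hZ : TendstoZeroInProbability P Z) (hW : TendstoZeroInProbability P W) :
    TendstoZeroInProbability P (fun n ω => Z n ω + W n ω) := fun ε hε => by
  have hsum := (hZ (ε / 2) (half_pos hε)).add (hW (ε / 2) (half_pos hε))
  rw [add_zero] at hsum
  refine tendsto_of_tendsto_of_tendsto_of_le_of_le tendsto_const_nhds hsum
    (fun _ => zero_le) fun n => (measure_mono fun ω hω => ?_).trans (measure_union_le _ _)
  by_contra hnot
  simp only [Set.mem_union, Set.mem_ofPred_eq, not_or, not_lt] at hω hnot
  linarith [abs_add_le (Z n ω) (W n ω)]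

theorem bdd_mul (hZ : TendstoZeroInProbability P Z) {c : ℕ → ℝ} {C : ℝ} (hc : ∀ n, |c n| ≤ C) :
    TendstoZeroInProbability P (fun n ω => c n * Z n ω) := fun ε hε => by
  have hC : 0 ≤ C := (abs_nonneg _).trans (hc 0)
  refine tendsto_of_tendsto_of_tendsto_of_le_of_le tendsto_const_nhds
    (hZ (ε / (C + 1)) (by positivity)) (fun _ => zero_le) fun n => measure_mono fun ω hω => ?_
  rw [Set.mem_ofPred_eq, abs_mul] at hω
  rw [Set.mem_ofPred_eq, div_lt_iff₀ (by positivity)]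
  calc ε < |c n| * |Z n ω| := hω
    _ ≤ (C + 1) * |Z n ω| := by gcongr; linarith [hc n]
    _ = |Z n ω| * (C + 1) := mul_comm _ _

theorem of_eventually_ae_abs_le
    (h : ∀ η > 0, ∀ᶠ n in atTop, ∀ᵐ ω ∂P n, |Z n ω| ≤ η) : TendstoZeroInProbability P Z := by
  refine fun ε hε => tendsto_const_nhds.congr' ((h ε hε).mono fun n hn => Eq.symm ?_)
  exact measure_eq_zero_iff_ae_notMem.2 (hn.mono fun ω hω => not_lt.2 hω)

end

section ProductMeasure

variable {X : Type*} [MeasurableSpace X] {U : Measure X} [IsProbabilityMeasure U]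

theorem average_pi {Y : X → ℝ} (hY : MemLp Y 2 U) (hY0 : ∫ x, Y x ∂U = 0) :
    TendstoZeroInProbability (fun n => Measure.pi fun _ : Fin n => U)
      (fun n x => (∑ i, Y (x i)) / n) := by
  intro ε hε
  have hlim : Tendsto (fun n : ℕ => ENNReal.ofReal (Var[Y; U] / ε ^ 2 * (1 / (n : ℝ))))
      atTop (𝓝 0) := by
    simpa using ENNReal.tendsto_ofReal
      ((tendsto_one_div_atTop_nhds_zero_nat (𝕜 := ℝ)).const_mul (Var[Y; U] / ε ^ 2))
  refine tendsto_of_tendsto_of_tendsto_of_le_of_le' tendsto_const_nhds hlim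
    (Eventually.of_forall fun _ => zero_le) ?_
  filter_upwards [eventually_gt_atTop 0] with n hn
  have hn' : (0 : ℝ) < n := Nat.cast_pos.2 hn
  have hmem (i : Fin n) : MemLp (fun x : Fin n → X => Y (x i)) 2 (Measure.pi fun _ => U) :=
    hY.comp_measurePreserving (measurePreserving_eval _ i)
  have hmean : ∫ x : Fin n → X, ∑ i, Y (x i) ∂(Measure.pi fun _ => U) = 0 := by
    rw [integral_finsetSum _ fun i _ => (hmem i).integrable one_le_two]
    refine Finset.sum_eq_zero fun i _ => ?_
    rw [integral_comp_eval (μ := fun _ : Fin n => U) hY.aestronglyMeasurable, hY0]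
  have hchebyshev := meas_ge_le_variance_div_sq (memLp_finsetSum' Finset.univ fun i _ => hmem i)
    (c := n * ε) (by positivity)
  rw [variance_sum_pi fun _ => hY] at hchebyshev
  simp only [Finset.sum_apply, hmean, sub_zero, Finset.sum_const, Finset.card_univ,
    Fintype.card_fin, nsmul_eq_mul] at hchebyshev
  refine (measure_mono fun x hx => ?_).trans (hchebyshev.trans_eq (congrArg _ (by field_simp)))
  rw [Set.mem_ofPred_eq, abs_div, abs_of_pos hn', lt_div_iff₀ hn'] at hx
  rw [Set.mem_ofPred_eq, mul_comm]
  exact hx.le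

variable {T : X → ℝ} {B : ℝ} {k : ℕ → ℝ}

theorem sum_comp_mul_pi (hB : ∀ᵐ x ∂U, |T x| ≤ B) {r : ℝ → ℝ} (hr : r =o[𝓝 0] (fun t => t ^ 2))
    {C : ℝ} (hC : ∀ n, n * k n ^ 2 ≤ C) :
    TendstoZeroInProbability (fun n => Measure.pi fun _ : Fin n => U)
      (fun n x => ∑ i, r (k n * T (x i))) := by
  refine of_eventually_ae_abs_le fun η hη => ?_
  have hC0 : 0 ≤ C := by simpa using hC 0
  have hk : Tendsto k atTop (𝓝 0) := tendsto_zero_of_natCast_mul_sq_le hC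
  filter_upwards [hk.eventually (eventually_forall_abs_comp_mul_le hr B
    (show 0 < η / (C + 1) by positivity))] with n hn
  filter_upwards [ae_pi_forall hB n] with x hx
  calc |∑ i, r (k n * T (x i))| ≤ ∑ i, |r (k n * T (x i))| := Finset.abs_sum_le_sum_abs _ _
    _ ≤ ∑ _i : Fin n, η / (C + 1) * k n ^ 2 := Finset.sum_le_sum fun i _ => hn _ (hx i)
    _ = η / (C + 1) * (n * k n ^ 2) := by simp; ring
    _ ≤ η / (C + 1) * (C + 1) := by gcongr; linarith [hC n]
    _ = η := by field_simp

theorem sum_log_comp_mul_pi (hT : AEStronglyMeasurable T U) (hB : ∀ᵐ x ∂U, |T x| ≤ B)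
    {f Z : ℝ → ℝ} {b c m : ℝ} (hf : HasQuadraticExpansion f 1 b c)
    (hZ : HasQuadraticExpansion Z 1 (b * m) (c * ∫ x, T x ^ 2 ∂U))
    {C : ℝ} (hC : ∀ n, n * k n ^ 2 ≤ C) :
    TendstoZeroInProbability (fun n => Measure.pi fun _ : Fin n => U)
      (fun n x => ∑ i, log ((Z (k n))⁻¹ * f (k n * T (x i)))
        - b * k n * ∑ i, (T (x i) - m)
        + n * k n ^ 2 * (b ^ 2 / 2) * (∫ x, T x ^ 2 ∂U - m ^ 2)) := by
  have hT2 : MemLp (fun x => T x ^ 2) 2 U := by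
    refine .of_bound (hT.pow 2) (B ^ 2) (hB.mono fun x hx => ?_)
    simpa using pow_le_pow_left₀ (abs_nonneg _) hx 2
  set q : ℝ := ∫ x, T x ^ 2 ∂U with hq
  have hcentered : ∫ x, (T x ^ 2 - q) ∂U = 0 := by
    rw [integral_sub (hT2.integrable one_le_two) (integrable_const _)]
    simp [hq]
  have haverage := (average_pi (hT2.sub (memLp_const q)) hcentered).bdd_mul
    (c := fun n => (c - b ^ 2 / 2) * (n * k n ^ 2)) (C := |c - b ^ 2 / 2| * C) fun n => by
      rw [abs_mul, abs_of_nonneg (show (0 : ℝ) ≤ n * k n ^ 2 by positivity)]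
      exact mul_le_mul_of_nonneg_left (hC n) (abs_nonneg _)
  have hrem_f := sum_comp_mul_pi hB hf.log hC
  have hrem_Z := sum_comp_mul_pi (U := U) (T := fun _ => 1) (B := 1) (by simp)
    hZ.log.neg_left hC
  have hk : Tendsto k atTop (𝓝 0) := tendsto_zero_of_natCast_mul_sq_le hC
  refine ((hrem_f.add hrem_Z).add haverage).congr ?_
  filter_upwards [eventually_gt_atTop 0, hk.eventually (hZ.tendsto.eventually_ne one_ne_zero),
    hk.eventually (eventually_forall_comp_mul (hf.tendsto.eventually_ne one_ne_zero) B)]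
    with n hn hZn hfn
  filter_upwards [ae_pi_forall hB n] with x hx
  have hlog (i : Fin n) : log ((Z (k n))⁻¹ * f (k n * T (x i))) =
      log (f (k n * T (x i))) - log (Z (k n)) := by
    rw [log_mul (inv_ne_zero hZn) (hfn _ (hx i)), log_inv]
    ring
  have hn' : (n : ℝ) ≠ 0 := Nat.cast_ne_zero.2 hn.ne'
  simp only [hlog, mul_pow, mul_one, zero_add, neg_sub, Finset.sum_sub_distrib,
    Finset.sum_add_distrib, ← Finset.mul_sum, Finset.sum_const, Finset.card_univ,
    Fintype.card_fin, nsmul_eq_mul, Pi.sub_apply]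
  field_simp
  ring

end ProductMeasure

end TendstoZeroInProbability

/-- The law `U` on `ι → ℝ` is invariant under every orthogonal matrix. Among the probability
measures carried by the unit sphere, this singles out the uniform one. -/
def IsRotationInvariant {ι : Type*} [Fintype ι] [DecidableEq ι] (U : Measure (ι → ℝ)) : Prop :=
  ∀ O ∈ Matrix.orthogonalGroup ι ℝ, U.map (fun x => O *ᵥ x) = U

section Rotation

variable {ι : Type*} [Fintype ι]

theorem sq_dotProduct_le (x v : ι → ℝ) : (x ⬝ᵥ v) ^ 2 ≤ (x ⬝ᵥ x) * (v ⬝ᵥ v) := by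
  simpa only [dotProduct, ← sq] using Finset.sum_mul_sq_le_sq_mul_sq Finset.univ x v

theorem integrable_sq_mul_sq_of_sphere {U : Measure (ι → ℝ)} [IsFiniteMeasure U]
    (hsphere : ∀ᵐ x ∂U, x ⬝ᵥ x = 1) (v w : ι → ℝ) :
    Integrable (fun x => (x ⬝ᵥ v) ^ 2 * (x ⬝ᵥ w) ^ 2) U := by
  refine .of_bound (by fun_prop) ((v ⬝ᵥ v) * (w ⬝ᵥ w)) (hsphere.mono fun x hx => ?_)
  have hle (u : ι → ℝ) : (x ⬝ᵥ u) ^ 2 ≤ u ⬝ᵥ u := by simpa [hx] using sq_dotProduct_le x u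
  rw [Real.norm_of_nonneg (by positivity)]
  exact mul_le_mul (hle v) (hle w) (sq_nonneg _) ((sq_nonneg _).trans (hle v))

variable [DecidableEq ι]

theorem exists_mem_orthogonalGroup_mulVec_eq {v w : ι → ℝ} (h : v ⬝ᵥ v = w ⬝ᵥ w) :
    ∃ O ∈ Matrix.orthogonalGroup ι ℝ, O *ᵥ v = w := by
  have hnorm : ‖WithLp.toLp 2 v‖ = ‖WithLp.toLp 2 w‖ := by
    simp only [EuclideanSpace.norm_eq, Real.norm_eq_abs, sq_abs]
    simpa only [dotProduct, ← sq] using congrArg Real.sqrt h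
  let R := Unitary.linearIsometryEquiv.symm
    (ℝ ∙ (WithLp.toLp 2 v - WithLp.toLp 2 w))ᗮ.reflection
  refine ⟨(toEuclideanCLM (n := ι) (𝕜 := ℝ)).symm R,
    Unitary.map_mem (toEuclideanCLM (n := ι) (𝕜 := ℝ)).symm R.2, ?_⟩
  rw [← WithLp.ofLp_toLp 2 v, ← ofLp_toEuclideanCLM, StarAlgEquiv.apply_symm_apply]
  exact congrArg WithLp.ofLp (Submodule.reflection_sub hnorm)

namespace IsRotationInvariant

variable {U : Measure (ι → ℝ)}

theorem map_dotProduct_eq (hU : IsRotationInvariant U) {v w : ι → ℝ} (h : v ⬝ᵥ v = w ⬝ᵥ w) :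
    U.map (fun x => x ⬝ᵥ v) = U.map (fun x => x ⬝ᵥ w) := by
  obtain ⟨O, hO, rfl⟩ := exists_mem_orthogonalGroup_mulVec_eq h
  have hcancel (x : ι → ℝ) : (O *ᵥ x) ⬝ᵥ (O *ᵥ v) = x ⬝ᵥ v := by
    rw [dotProduct_mulVec, ← mulVec_transpose, mulVec_mulVec,
      (Matrix.mem_orthogonalGroup_iff' _ _).1 hO, one_mulVec]
  conv_rhs => rw [← hU O hO, Measure.map_map (by fun_prop) (by fun_prop)]
  simp only [Function.comp_def, hcancel]

theorem integral_dotProduct_pow_eq (hU : IsRotationInvariant U) {v w : ι → ℝ} {c : ℝ}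
    (h : v ⬝ᵥ v = c ^ 2 * (w ⬝ᵥ w)) (m : ℕ) :
    ∫ x, (x ⬝ᵥ v) ^ m ∂U = c ^ m * ∫ x, (x ⬝ᵥ w) ^ m ∂U := by
  have hlaw := hU.map_dotProduct_eq (w := c • w) (h.trans (by simp; ring))
  have hpow := congrArg (fun μ => ∫ t, t ^ m ∂μ) hlaw
  rw [integral_map (by fun_prop) (by fun_prop), integral_map (by fun_prop) (by fun_prop)] at hpow
  simpa only [dotProduct_smul, smul_eq_mul, mul_pow, integral_const_mul] using hpow

theorem integral_sq_mul_sq (hU : IsRotationInvariant U)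
    (hint : ∀ v : ι → ℝ, Integrable (fun x => (x ⬝ᵥ v) ^ 4) U) {v w : ι → ℝ}
    (hvw : v ⬝ᵥ w = 0) (hnorm : v ⬝ᵥ v = w ⬝ᵥ w) :
    ∫ x, (x ⬝ᵥ v) ^ 2 * (x ⬝ᵥ w) ^ 2 ∂U = (∫ x, (x ⬝ᵥ v) ^ 4 ∂U) / 3 := by
  have hsqrt : √2 ^ 4 = 4 := by
    rw [show √2 ^ 4 = (√2 ^ 2) ^ 2 by ring, Real.sq_sqrt zero_le_two]
    norm_num
  have hw := hU.integral_dotProduct_pow_eq (c := 1) (v := w) (w := v) (by simp [hnorm]) 4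
  have hadd := hU.integral_dotProduct_pow_eq (c := √2) (v := v + w) (w := v)
    (by simp [dotProduct_comm w v, hvw, ← hnorm, two_mul]) 4
  have hsub := hU.integral_dotProduct_pow_eq (c := √2) (v := v - w) (w := v)
    (by simp [dotProduct_comm w v, hvw, ← hnorm, two_mul]) 4
  have hpolar (x : ι → ℝ) : (x ⬝ᵥ v) ^ 2 * (x ⬝ᵥ w) ^ 2 =
      ((x ⬝ᵥ (v + w)) ^ 4 + (x ⬝ᵥ (v - w)) ^ 4 - 2 * ((x ⬝ᵥ v) ^ 4 + (x ⬝ᵥ w) ^ 4)) / 12 := by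
    simp only [dotProduct_add, dotProduct_sub]
    ring
  simp only [hpolar]
  rw [integral_div,
    integral_sub ((hint _).fun_add (hint _)) (((hint v).fun_add (hint w)).const_mul 2),
    integral_add (hint _) (hint _), integral_const_mul, integral_add (hint _) (hint _), hadd, hsub,
    hw, hsqrt]
  ring

theorem integral_dotProduct_pow_four [IsProbabilityMeasure U] (hU : IsRotationInvariant U)
    (hsphere : ∀ᵐ x ∂U, x ⬝ᵥ x = 1) {θ : ι → ℝ} (hθ : θ ⬝ᵥ θ = 1) :
    ∫ x, (x ⬝ᵥ θ) ^ 4 ∂U = 3 / (Fintype.card ι * (Fintype.card ι + 2)) := by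
  have hint := integrable_sq_mul_sq_of_sphere hsphere
  set m := ∫ x, (x ⬝ᵥ θ) ^ 4 ∂U
  have hdiag (i : ι) : ∫ x, (x ⬝ᵥ Pi.single i 1) ^ 4 ∂U = m := by
    simpa using hU.integral_dotProduct_pow_eq (c := 1) (v := Pi.single i 1) (by simp [hθ]) 4
  have hmixed (i j : ι) : ∫ x, (x ⬝ᵥ Pi.single i 1) ^ 2 * (x ⬝ᵥ Pi.single j 1) ^ 2 ∂U =
      m / 3 + if i = j then 2 * m / 3 else 0 := by
    split_ifs with hij
    · subst hij
      simp only [← pow_add, hdiag]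
      ring
    · rw [hU.integral_sq_mul_sq (fun v => by simpa only [← pow_add] using hint v v)
        (by simp [hij]) (by simp), hdiag, add_zero]
  have htotal : ∑ i, ∑ j, ∫ x, (x ⬝ᵥ Pi.single i 1) ^ 2 * (x ⬝ᵥ Pi.single j 1) ^ 2 ∂U = 1 := by
    have hsum (x : ι → ℝ) : ∑ i, ∑ j, (x ⬝ᵥ Pi.single i 1) ^ 2 * (x ⬝ᵥ Pi.single j 1) ^ 2 =
        (x ⬝ᵥ x) * (x ⬝ᵥ x) := by
      simp only [dotProduct_single, mul_one, ← Finset.sum_mul_sum]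
      simp only [dotProduct, sq]
    have hone : ∫ x, (x ⬝ᵥ x) * (x ⬝ᵥ x) ∂U = 1 := by
      rw [integral_congr_ae (hsphere.mono fun x hx => show _ = (1 : ℝ) by rw [hx, one_mul])]
      simp
    simp only [← integral_finsetSum _ fun j _ => hint (Pi.single _ 1) (Pi.single j 1)]
    rw [← integral_finsetSum _ fun i _ => integrable_finsetSum _ fun j _ => hint _ _]
    simpa only [hsum] using hone
  simp only [hmixed, Finset.sum_add_distrib, Finset.sum_const, Finset.card_univ,
    Finset.sum_ite_eq, Finset.mem_univ, if_true, nsmul_eq_mul] at htotal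
  have hcard : (Fintype.card ι : ℝ) ≠ 0 := fun h => by simp [h] at htotal
  rw [eq_div_iff (by positivity)]
  linear_combination 3 * htotal

end IsRotationInvariant

end Rotation

section GegenbauerWeight

variable {α : ℝ}

theorem intervalIntegrable_one_sub_sq_rpow (hα : -1 < α) :
    IntervalIntegrable (fun s : ℝ => (1 - s ^ 2) ^ α) volume (-1) 1 := by
  have hhalf : IntervalIntegrable (fun s : ℝ => (1 - s ^ 2) ^ α) volume 0 1 := by
    have hsub : IntervalIntegrable (fun s : ℝ => (1 - s) ^ α) volume 0 1 := by
      simpa using ((intervalIntegral.intervalIntegrable_rpow' hα).comp_sub_left 1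
        (a := 0) (b := 1)).symm
    have hadd : ContinuousOn (fun s : ℝ => (1 + s) ^ α) (Set.uIcc 0 1) := by
      refine ContinuousOn.rpow_const (by fun_prop) fun s hs => Or.inl ?_
      rw [Set.uIcc_of_le zero_le_one] at hs
      linarith [hs.1]
    refine (hsub.mul_continuousOn hadd).congr fun s hs => ?_
    rw [Set.uIoc_of_le zero_le_one] at hs
    change (1 - s) ^ α * (1 + s) ^ α = (1 - s ^ 2) ^ α
    rw [← mul_rpow (by linarith [hs.2]) (by linarith [hs.1])]
    ring_nf
  have hneg : IntervalIntegrable (fun s : ℝ => (1 - s ^ 2) ^ α) volume (-1) 0 := by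
    simpa using ((IntervalIntegrable.iff_comp_neg (by simp)).1 hhalf).symm
  exact hneg.trans hhalf

theorem integral_one_sub_sq_rpow_pos (hα : -1 < α) :
    0 < ∫ s in (-1 : ℝ)..1, (1 - s ^ 2) ^ α :=
  intervalIntegral.intervalIntegral_pos_of_pos_on (intervalIntegrable_one_sub_sq_rpow hα)
    (fun x hx => rpow_pos_of_pos (by nlinarith [hx.1, hx.2]) _) (by norm_num)

theorem hasDerivAt_pow_mul_one_sub_sq_rpow (m : ℕ) {s : ℝ} (hs : 0 < 1 - s ^ 2) :
    HasDerivAt (fun s : ℝ => s ^ (m + 1) * (1 - s ^ 2) ^ (α + 1))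
      ((m + 1) * ((1 - s ^ 2) ^ α * s ^ m) -
        (m + 2 * α + 3) * ((1 - s ^ 2) ^ α * s ^ (m + 2))) s := by
  have hsq : HasDerivAt (fun s : ℝ => 1 - s ^ 2) (-(2 * s)) s := by
    simpa using (hasDerivAt_pow 2 s).const_sub 1
  refine ((hasDerivAt_pow (m + 1) s).mul
    (hsq.rpow_const (p := α + 1) (Or.inl hs.ne'))).congr_deriv ?_
  rw [add_sub_cancel_right, rpow_add_one hs.ne', Nat.add_sub_cancel]
  push_cast
  ring

theorem integral_one_sub_sq_rpow_mul_pow_add_two (hα : -1 < α) (m : ℕ) :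
    (m + 2 * α + 3) * ∫ s in (-1 : ℝ)..1, (1 - s ^ 2) ^ α * s ^ (m + 2) =
      (m + 1) * ∫ s in (-1 : ℝ)..1, (1 - s ^ 2) ^ α * s ^ m := by
  have hint (j : ℕ) : IntervalIntegrable (fun s : ℝ => (1 - s ^ 2) ^ α * s ^ j) volume (-1) 1 :=
    (intervalIntegrable_one_sub_sq_rpow hα).mul_continuousOn (by fun_prop)
  have hcont : ContinuousOn (fun s : ℝ => s ^ (m + 1) * (1 - s ^ 2) ^ (α + 1)) (Set.Icc (-1) 1) :=
    ContinuousOn.mul (by fun_prop)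
      (ContinuousOn.rpow_const (by fun_prop) fun _ _ => Or.inr (by linarith))
  have hftc := intervalIntegral.integral_eq_sub_of_hasDerivAt_of_le (by norm_num) hcont
    (fun s hs => hasDerivAt_pow_mul_one_sub_sq_rpow m (by nlinarith [hs.1, hs.2]))
    (((hint m).const_mul _).sub ((hint (m + 2)).const_mul _))
  rw [intervalIntegral.integral_sub ((hint m).const_mul _) ((hint (m + 2)).const_mul _),
    intervalIntegral.integral_const_mul, intervalIntegral.integral_const_mul] at hftc
  have hboundary : (0 : ℝ) ^ (α + 1) = 0 := zero_rpow (by linarith)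
  norm_num [hboundary] at hftc
  linarith

/-- The probability measure on `[-1, 1]` whose density is proportional to the Gegenbauer weight
`(1 - s²)^α`, where `-1 < α`. For `α = (p - 3) / 2` it is the law of a coordinate of a uniform
random point on the unit sphere of `ℝ^p`. -/
def gegenbauerLaw (α : ℝ) : Measure ℝ :=
  (volume.restrict (Set.Ioc (-1) 1)).withDensity fun s =>
    ENNReal.ofReal ((1 - s ^ 2) ^ α / ∫ t in (-1 : ℝ)..1, (1 - t ^ 2) ^ α)

namespace gegenbauerLaw

theorem ae_mem_Ioc : ∀ᵐ s ∂gegenbauerLaw α, s ∈ Set.Ioc (-1 : ℝ) 1 :=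
  (withDensity_absolutelyContinuous _ _).ae_le (ae_restrict_mem measurableSet_Ioc)

theorem ae_abs_sq_le_one : ∀ᵐ s ∂gegenbauerLaw α, |s ^ 2| ≤ 1 :=
  ae_mem_Ioc.mono fun s hs => by
    rw [abs_sq, sq_le_one_iff_abs_le_one]
    exact abs_le.2 ⟨hs.1.le, hs.2⟩

theorem density_nonneg (hα : -1 < α) {s : ℝ} (hs : s ∈ Set.Ioc (-1 : ℝ) 1) :
    0 ≤ (1 - s ^ 2) ^ α / ∫ t in (-1 : ℝ)..1, (1 - t ^ 2) ^ α :=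
  div_nonneg (rpow_nonneg (by nlinarith [hs.1, hs.2]) _) (integral_one_sub_sq_rpow_pos hα).le

theorem integral_eq (hα : -1 < α) (g : ℝ → ℝ) :
    ∫ s, g s ∂gegenbauerLaw α =
      (∫ s in (-1 : ℝ)..1, (1 - s ^ 2) ^ α * g s) / ∫ s in (-1 : ℝ)..1, (1 - s ^ 2) ^ α := by
  have hnonneg := fun s hs => density_nonneg hα (s := s) hs
  unfold gegenbauerLaw
  generalize ∫ t in (-1 : ℝ)..1, (1 - t ^ 2) ^ α = A at hnonneg ⊢
  rw [integral_withDensity_eq_integral_toReal_smul (by fun_prop) (by simp),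
    ← intervalIntegral.integral_div, intervalIntegral.integral_of_le (by norm_num)]
  refine setIntegral_congr_fun measurableSet_Ioc fun s hs => ?_
  change (ENNReal.ofReal _).toReal * g s = _
  rw [ENNReal.toReal_ofReal (hnonneg s hs), div_mul_eq_mul_div]

theorem isProbabilityMeasure (hα : -1 < α) : IsProbabilityMeasure (gegenbauerLaw α) := by
  have hpos := integral_one_sub_sq_rpow_pos hα
  have hnonneg := ae_restrict_of_forall_mem (μ := volume) measurableSet_Ioc
    fun s hs => density_nonneg hα (s := s) hs
  refine ⟨?_⟩
  rw [gegenbauerLaw, withDensity_apply _ MeasurableSet.univ, Measure.restrict_univ,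
    ← ofReal_integral_eq_lintegral_ofReal
      ((intervalIntegrable_one_sub_sq_rpow hα).div_const _).1 hnonneg,
    ← intervalIntegral.integral_of_le (by norm_num), intervalIntegral.integral_div,
    div_self hpos.ne', ENNReal.ofReal_one]

theorem integral_pow_add_two (hα : -1 < α) (m : ℕ) :
    ∫ s, s ^ (m + 2) ∂gegenbauerLaw α =
      (m + 1) / (m + 2 * α + 3) * ∫ s, s ^ m ∂gegenbauerLaw α := by
  have hm : (0 : ℝ) < m + 2 * α + 3 := by linarith [m.cast_nonneg (α := ℝ)]
  rw [integral_eq hα, integral_eq hα, div_mul_div_comm,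
    ← integral_one_sub_sq_rpow_mul_pow_add_two hα, mul_div_mul_left _ _ hm.ne']

theorem integral_sq (hα : -1 < α) : ∫ s, s ^ 2 ∂gegenbauerLaw α = 1 / (2 * α + 3) := by
  have := isProbabilityMeasure hα
  simpa using integral_pow_add_two hα 0

theorem integral_pow_four (hα : -1 < α) :
    ∫ s, s ^ 4 ∂gegenbauerLaw α = 3 / ((2 * α + 3) * (2 * α + 5)) := by
  have hrec := integral_pow_add_two hα 2
  rw [integral_sq hα] at hrec
  rw [hrec, div_mul_div_comm]
  push_cast
  ring_nf

end gegenbauerLaw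

end GegenbauerWeight

theorem hasQuadraticExpansion_c0_div_cKF {p : ℕ} (hp : 2 ≤ p) {f : ℝ → ℝ} {b c : ℝ}
    (hf : HasQuadraticExpansion f 1 b c) (hcont : ∀ᶠ t in 𝓝 0, ContinuousAt f t) :
    HasQuadraticExpansion (fun k => c0 p / cKF p k f) 1 (b * (1 / p))
      (c * (3 / (p * (p + 2)))) := by
  have hp' : (2 : ℝ) ≤ p := Nat.ofNat_le_cast.2 hp
  have hα : -1 < ((p : ℝ) - 3) / 2 := by linarith
  have := gegenbauerLaw.isProbabilityMeasure hα
  have hT : AEStronglyMeasurable (fun s : ℝ => s ^ 2) (gegenbauerLaw (((p : ℝ) - 3) / 2)) := by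
    fun_prop
  have hratio (k : ℝ) : ∫ s, f (k * s ^ 2) ∂gegenbauerLaw (((p : ℝ) - 3) / 2) =
      c0 p / cKF p k f := by
    rw [gegenbauerLaw.integral_eq hα, c0, cKF, div_div_div_eq, one_mul, mul_one]
  have h := hf.integral_comp_mul hT gegenbauerLaw.ae_abs_sq_le_one
    (eventually_integrable_comp_mul hT gegenbauerLaw.ae_abs_sq_le_one hcont)
  simp only [hratio, ← pow_mul, Nat.reduceMul, gegenbauerLaw.integral_sq hα,
    gegenbauerLaw.integral_pow_four hα] at h
  convert h using 4 <;> ring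

theorem natCast_mul_div_sqrt_sq {n : ℕ} (hn : n ≠ 0) (t : ℝ) : n * (t / √n) ^ 2 = t ^ 2 := by
  rw [div_pow, sq_sqrt n.cast_nonneg, mul_div_cancel₀ _ (Nat.cast_ne_zero.2 hn)]

theorem natCast_mul_div_sqrt_sq_le (n : ℕ) (t : ℝ) : n * (t / √n) ^ 2 ≤ t ^ 2 := by
  rcases eq_or_ne n 0 with rfl | hn
  · simpa using sq_nonneg t
  · exact (natCast_mul_div_sqrt_sq hn t).le

theorem IsRotationInvariant.sum_log_cKF_div_c0_mul {p : ℕ} (hp : 2 ≤ p) {U : Measure (Fin p → ℝ)}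
    [IsProbabilityMeasure U] (hU : IsRotationInvariant U) (hsphere : ∀ᵐ x ∂U, x ⬝ᵥ x = 1)
    {θ : Fin p → ℝ} (hθ : θ ⬝ᵥ θ = 1) {f : ℝ → ℝ} {b c : ℝ} (hf : HasQuadraticExpansion f 1 b c)
    (hcont : ∀ᶠ t in 𝓝 0, ContinuousAt f t) {k : ℕ → ℝ} {C : ℝ} (hC : ∀ n, n * k n ^ 2 ≤ C) :
    TendstoZeroInProbability (fun n => Measure.pi fun _ : Fin n => U)
      (fun n x => ∑ i, log (cKF p (k n) f / c0 p * f (k n * (x i ⬝ᵥ θ) ^ 2))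
        - b * k n * ∑ i, ((x i ⬝ᵥ θ) ^ 2 - 1 / (p : ℝ))
        + n * k n ^ 2 * (b ^ 2 / 2) * (3 / (p * (p + 2)) - (1 / (p : ℝ)) ^ 2)) := by
  have hbdd : ∀ᵐ x ∂U, |(x ⬝ᵥ θ) ^ 2| ≤ 1 := hsphere.mono fun x hx => by
    simpa [hx, hθ] using sq_dotProduct_le x θ
  have hmoment : ∫ x, ((x ⬝ᵥ θ) ^ 2) ^ 2 ∂U = 3 / (p * (p + 2)) := by
    simpa only [← pow_mul, Fintype.card_fin] using hU.integral_dotProduct_pow_four hsphere hθ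
  have hZ := hasQuadraticExpansion_c0_div_cKF hp hf hcont
  rw [← hmoment] at hZ
  simpa only [hmoment, inv_div] using
    TendstoZeroInProbability.sum_log_comp_mul_pi (by fun_prop) hbdd hf hZ hC

theorem LAN_expansion_specified_location_general
    (p : ℕ) (hp : 2 ≤ p)
    (U : Measure (Fin p → ℝ)) [IsProbabilityMeasure U]
    (hUsphere : U {x : Fin p → ℝ | ∑ a, x a ^ 2 = 1}ᶜ = 0)
    (hUrot : ∀ O : Matrix (Fin p) (Fin p) ℝ, O * Oᵀ = 1 →
      Measure.map (fun x => O.mulVec x) U = U)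
    (θ : Fin p → ℝ) (hθ : ∑ a, θ a ^ 2 = 1)
    (f : ℝ → ℝ)
    (hf_diff : ∀ᶠ x in 𝓝 (0:ℝ), DifferentiableAt ℝ f x)
    (hf_diff2 : DifferentiableAt ℝ (deriv f) 0)
    (hf0 : f 0 = 1) (hf'0 : deriv f 0 = 1)
    (τ : ℕ → ℝ) (hτ_bdd : ∃ C : ℝ, ∀ n, |τ n| ≤ C)
    (κ : ℕ → ℝ) (hκ : ∀ n, κ n = τ n * p / Real.sqrt n)
    (Λ : ∀ n : ℕ, (Fin n → (Fin p → ℝ)) → ℝ)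
    (hΛ : ∀ n x, Λ n x =
      ∑ i, Real.log ((cKF p (κ n) f / c0 p) * f (κ n * (∑ a, x i a * θ a) ^ 2)))
    (Δ : ∀ n : ℕ, (Fin n → (Fin p → ℝ)) → ℝ)
    (hΔ : ∀ n x, Δ n x =
      ((p : ℝ) / Real.sqrt n) * ∑ i, ((∑ a, x i a * θ a) ^ 2 - 1 / (p : ℝ))) :
    TendstoZeroInProbability (fun n => Measure.pi fun _ : Fin n => U)
      (fun n x => Λ n x - τ n * Δ n x + (τ n) ^ 2 / 2 * (2 * ((p:ℝ) - 1) / ((p:ℝ) + 2))) := by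
  obtain ⟨C, hC⟩ := hτ_bdd
  have hsphere : ∀ᵐ x ∂U, x ⬝ᵥ x = 1 := by
    have hsum : ∀ᵐ x ∂U, ∑ a, x a ^ 2 = 1 := hUsphere
    simpa only [dotProduct, ← sq] using hsum
  have hθ' : θ ⬝ᵥ θ = 1 := by simpa only [dotProduct, ← sq] using hθ
  have hU : IsRotationInvariant U := fun O hO => hUrot O ((Matrix.mem_orthogonalGroup_iff _ _).1 hO)
  have hf : HasQuadraticExpansion f 1 1 (deriv (deriv f) 0 / 2) := by
    simpa only [hf0, hf'0] using HasQuadraticExpansion.of_hasDerivAt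
      (hf_diff.mono fun x hx => hx.hasDerivAt) hf_diff2.hasDerivAt
  have hκC (n : ℕ) : n * κ n ^ 2 ≤ (C * p) ^ 2 := by
    rw [hκ]
    refine (natCast_mul_div_sqrt_sq_le n _).trans (sq_le_sq' ?_ ?_)
    all_goals nlinarith [abs_le.1 (hC n), p.cast_nonneg (α := ℝ)]
  refine (hU.sum_log_cKF_div_c0_mul hp hsphere hθ' hf
    (hf_diff.mono fun x hx => hx.continuousAt) hκC).congr ?_
  filter_upwards [eventually_ne_atTop 0] with n hn
  refine .of_forall fun x => ?_
  have hinfo : n * κ n ^ 2 * (1 ^ 2 / 2) * (3 / (p * (p + 2)) - (1 / (p : ℝ)) ^ 2) =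
      τ n ^ 2 / 2 * (2 * (p - 1) / (p + 2)) := by
    rw [hκ, natCast_mul_div_sqrt_sq hn]
    field_simp
    ring
  simp only [hinfo]
  simp only [hΛ, hΔ, hκ, dotProduct]
  ring

/-- LAN stochastic expansion, Theorem 3.1.
With `κ_n = τ_n p / √n`, `(τ_n)` bounded and not converging to `0`, the log-likelihood ratio
`Λ_n` satisfies `Λ_n - τ_n Δ_θ^{(n)} + (τ_n²/2) Γ_p → 0` in `P_0^{(n)}`-probability, where
`Δ_θ^{(n)}(x) = (p/√n) Σ_i ((x_i'θ)² - 1/p)` and `Γ_p = 2(p-1)/(p+2)`. -/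
theorem LAN_expansion_specified_location
    (p : ℕ) (hp : 2 ≤ p)
    (U : Measure (Fin p → ℝ)) [IsProbabilityMeasure U]
    (hUsphere : U {x : Fin p → ℝ | ∑ a, x a ^ 2 = 1}ᶜ = 0)
    (hUrot : ∀ O : Matrix (Fin p) (Fin p) ℝ, O * Oᵀ = 1 →
      Measure.map (fun x => O.mulVec x) U = U)
    (θ : Fin p → ℝ) (hθ : ∑ a, θ a ^ 2 = 1)
    (f : ℝ → ℝ) (hf_pos : ∀ x, 0 < f x) (hf_mono : Monotone f)
    (hf_diff : ∀ᶠ x in 𝓝 (0:ℝ), DifferentiableAt ℝ f x)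
    (hf_diff2 : DifferentiableAt ℝ (deriv f) 0)
    (hf0 : f 0 = 1) (hf'0 : deriv f 0 = 1)
    (τ : ℕ → ℝ) (hτ_bdd : ∃ C : ℝ, ∀ n, |τ n| ≤ C)
    (hτ_not0 : ¬ Tendsto τ atTop (𝓝 (0:ℝ)))
    (κ : ℕ → ℝ) (hκ : ∀ n, κ n = τ n * p / Real.sqrt n)
    -- log-likelihood ratio
    (Λ : ∀ n : ℕ, (Fin n → (Fin p → ℝ)) → ℝ)
    (hΛ : ∀ n x, Λ n x =
      ∑ i, Real.log ((cKF p (κ n) f / c0 p) * f (κ n * (∑ a, x i a * θ a) ^ 2)))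
    -- central sequence
    (Δ : ∀ n : ℕ, (Fin n → (Fin p → ℝ)) → ℝ)
    (hΔ : ∀ n x, Δ n x =
      ((p : ℝ) / Real.sqrt n) * ∑ i, ((∑ a, x i a * θ a) ^ 2 - 1 / (p : ℝ))) :
    ∀ ε > (0:ℝ),
      Tendsto (fun n => Measure.pi (fun _ : Fin n => U)
          {x | ε < |Λ n x - τ n * Δ n x + (τ n) ^ 2 / 2 * (2 * ((p:ℝ) - 1) / ((p:ℝ) + 2))|})
        atTop (𝓝 (0 : ℝ≥0∞)) :=
  LAN_expansion_specified_location_general p hp U hUsphere hUrot θ hθ f hf_diff hf_diff2 hf0 hf'0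
    τ hτ_bdd κ hκ Λ hΛ Δ hΔ

end
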